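/- Let f : ℂ → ℂ be a transcendental entire function that is strongly polynomial-like. Then either K(f) is connected, or else for every point z ∈ ∂K(f) and every open neighbourhood V of z, the set of connected components of K(f) that meet V is uncountable. -/

import Mathlib

open Filter Topology

/-- The set `K(f)` of points whose orbit under iteration of `f` is bounded. -/
def boundedOrbitSet (f : ℂ → ℂ) : Set ℂ :=
  {z : ℂ | Bornology.IsBounded (Set.range fun n : ℕ => f^[n] z)}

/-- `f` is a transcendental entire function: holomorphic on all of `ℂ` and not a polynomial. -/
def TranscendentalEntire (f : ℂ → ℂ) : Prop :=
  Differentiable ℂ f ∧ ¬∃ p : Polynomial ℂ, ∀ z, f z = p.eval z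

/-- `S` surrounds `T`: `T` lies in a bounded connected component of the complement of `S`. -/
def SurroundsSet (S T : Set ℂ) : Prop :=
  ∃ z ∈ Sᶜ, T ⊆ connectedComponentIn Sᶜ z ∧
    Bornology.IsBounded (connectedComponentIn Sᶜ z)

/-- `f` is strongly polynomial-like: there is an exhausting sequence of bounded, simply
connected domains `D n` with `closure (D n) ⊆ D (n+1)` such that `f(∂(D n))` surrounds
`closure (D n)`. -/
def StronglyPolynomialLike (f : ℂ → ℂ) : Prop :=
  ∃ D : ℕ → Set ℂ,
    (∀ n, IsOpen (D n)) ∧ (∀ n, IsConnected (D n)) ∧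
    (∀ n, Bornology.IsBounded (D n)) ∧
    (∀ n, SimplyConnectedSpace (D n)) ∧
    (∀ n, closure (D n) ⊆ D (n + 1)) ∧
    (⋃ n, D n) = Set.univ ∧
    (∀ n, SurroundsSet (f '' frontier (D n)) (closure (D n)))


lemma aux_net (w : ℂ) : ∃ v ∈ Metric.ball w 2, ∃ n : ℤ, Complex.cosh v ^ 2 = n := by
  obtain ⟨τ, hτ, n, hn⟩ : ∃ τ : ℝ, |τ - w.re| ≤ 1 ∧ ∃ n : ℤ, Real.cosh τ ^ 2 = n := by
    have key : ∀ t : ℝ, 0 ≤ t → ∃ τ ∈ Set.Icc t (t+1), ∃ n : ℤ, Real.cosh τ ^ 2 = n := by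
      intro t ht
      have hc : ContinuousOn (fun τ : ℝ => Real.cosh τ ^ 2) (Set.Icc t (t+1)) :=
        (Real.continuous_cosh.pow 2).continuousOn
      have h1 : Real.cosh t ^ 2 + 1 ≤ Real.cosh (t+1) ^ 2 := by
        rw [Real.cosh_add]
        have a1 : 1 ≤ Real.sinh 1 := Real.self_le_sinh_iff.2 zero_le_one
        have a2 : 1 ≤ Real.cosh 1 := Real.one_le_cosh 1
        have a3 : 1 ≤ Real.cosh t := Real.one_le_cosh t
        have a4 : 0 ≤ Real.sinh t := Real.sinh_nonneg_iff.2 ht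
        have a5 : Real.cosh 1 ^ 2 = Real.sinh 1 ^ 2 + 1 := Real.cosh_sq 1
        have a6 : 0 ≤ Real.sinh t * Real.sinh 1 := by positivity
        have a7 : 0 ≤ Real.cosh t * Real.cosh 1 := by positivity
        have a8 : 1 ≤ Real.cosh t ^ 2 := by nlinarith
        have a9 : 1 ≤ Real.sinh 1 ^ 2 := by nlinarith
        have : (Real.cosh t * Real.cosh 1) ^ 2 ≤ (Real.cosh t * Real.cosh 1 + Real.sinh t * Real.sinh 1)^2 := by
          gcongr; linarith
        nlinarith
      have := intermediate_value_Icc (by linarith : t ≤ t+1) hc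
      obtain ⟨τ, h, h'⟩ := this (show ((⌈Real.cosh t ^ 2⌉ : ℤ) : ℝ) ∈ _ from
        ⟨Int.le_ceil _, (Int.ceil_lt_add_one _).le.trans h1⟩)
      exact ⟨τ, h, _, h'⟩
    rcases le_total 0 w.re with h | h
    · obtain ⟨τ, h1, n, hn⟩ := key _ h
      exact ⟨τ, by rw [abs_le]; constructor <;> linarith [h1.1, h1.2], n, hn⟩
    · obtain ⟨τ, h1, n, hn⟩ := key (-w.re) (by linarith)
      exact ⟨-τ, by rw [abs_le]; constructor <;> linarith [h1.1, h1.2], n, by rw [Real.cosh_neg, hn]⟩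
  obtain ⟨m, hm⟩ : ∃ m : ℤ, |m * Real.pi - w.im| ≤ Real.pi / 2 := by
    refine ⟨round (w.im / Real.pi), ?_⟩
    have := abs_sub_round (w.im / Real.pi)
    have hpi := Real.pi_pos
    have e : (round (w.im / Real.pi)) * Real.pi - w.im
      = -((w.im / Real.pi - round (w.im / Real.pi)) * Real.pi) := by field_simp; ring
    rw [e, abs_neg, abs_mul, abs_of_pos hpi]
    nlinarith
  refine ⟨(τ : ℂ) + ((m * Real.pi : ℝ) : ℂ) * Complex.I, ?_, n, ?_⟩
  · rw [Metric.mem_ball, dist_eq_norm, ← sq_lt_sq₀ (norm_nonneg _) (by norm_num), Complex.sq_norm,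
      Complex.normSq_apply]
    simp only [Complex.sub_re, Complex.add_re, Complex.ofReal_re, Complex.mul_re, Complex.I_re,
      Complex.ofReal_im, Complex.I_im, Complex.sub_im, Complex.add_im, Complex.mul_im]
    have h3 := Real.pi_lt_d2
    have h4 := Real.pi_pos
    have e1 : (τ - w.re)^2 ≤ 1 := by rw [← sq_abs]; nlinarith [abs_nonneg (τ - w.re)]
    have e2 : (m * Real.pi - w.im)^2 ≤ (Real.pi/2)^2 := by
      rw [← sq_abs]; gcongr
    nlinarith
  · have hs : Real.sin (m * Real.pi) = 0 := Real.sin_int_mul_pi m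
    have hc : Real.cos (m * Real.pi) ^ 2 = 1 := by
      have := Real.sin_sq_add_cos_sq (m * Real.pi)
      rw [hs] at this; linarith
    rw [Complex.cosh_add, Complex.cosh_mul_I, Complex.sinh_mul_I, ← Complex.ofReal_sin,
      ← Complex.ofReal_cos, hs, ← Complex.ofReal_cosh]
    have : ((Real.cosh τ ^ 2 * Real.cos (m * Real.pi) ^ 2 : ℝ) : ℂ) = ((n : ℝ) : ℂ) := by
      rw [hc, hn, mul_one]
    rw [Complex.ofReal_mul, Complex.ofReal_pow, Complex.ofReal_pow, Complex.ofReal_intCast] at this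
    rw [← this]
    simp only [Complex.ofReal_zero, zero_mul, mul_zero, add_zero]
    ring

lemma exists_log {g : ℂ → ℂ} {x : ℂ} {r : ℝ} (hr : 0 < r) (hg : DifferentiableOn ℂ g (Metric.ball x r))
    (h0 : ∀ z ∈ Metric.ball x r, g z ≠ 0) (l0 : ℂ) (hl0 : Complex.exp l0 = g x) :
    ∃ l : ℂ → ℂ, DifferentiableOn ℂ l (Metric.ball x r) ∧ l x = l0 ∧
      ∀ z ∈ Metric.ball x r, Complex.exp (l z) = g z := by
  have hd : DifferentiableOn ℂ (fun z => deriv g z / g z) (Metric.ball x r) :=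
    (hg.deriv Metric.isOpen_ball).div hg h0
  obtain ⟨l, hl, hl'⟩ := hd.isExactOn_ball.with_val_at x l0
  have hxm : x ∈ Metric.ball x r := Metric.mem_ball_self hr
  refine ⟨l, fun z hz => (hl' z hz).differentiableAt.differentiableWithinAt, hl, ?_⟩
  have hq : ∀ z ∈ Metric.ball x r, HasDerivAt (fun z => g z * Complex.exp (- l z)) 0 z := by
    intro z hz
    have h1 := (hg.differentiableAt (Metric.isOpen_ball.mem_nhds hz)).hasDerivAt
    have h2 := (hl' z hz).neg.cexp
    have h3 := h1.mul h2
    have e : deriv g z * Complex.exp ((-l) z) + g z * (Complex.exp ((-l) z) * -(deriv g z / g z)) = 0 := by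
      have := h0 z hz
      field_simp
      ring
    rw [e] at h3
    exact h3
  have hconst : ∀ z ∈ Metric.ball x r, g z * Complex.exp (- l z) = g x * Complex.exp (- l x) := by
    intro z hz
    refine (convex_ball x r).is_const_of_fderivWithin_eq_zero (𝕜 := ℂ) (f := fun z => g z * Complex.exp (- l z))
      (fun z hz => (hq z hz).differentiableAt.differentiableWithinAt) ?_ hz hxm
    intro y hy
    rw [fderivWithin_of_isOpen Metric.isOpen_ball hy]
    ext
    simp [(hq y hy).deriv]
  intro z hz
  have h := hconst z hz
  rw [hl, Complex.exp_neg, Complex.exp_neg, ← hl0, mul_inv_cancel₀ (Complex.exp_ne_zero _)] at h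
  have := Complex.exp_ne_zero (l z)
  field_simp at h
  exact h.symm

lemma bloch {h : ℂ → ℂ} {x : ℂ} {R : ℝ} (hR : 0 < R) (hh : DifferentiableOn ℂ h (Metric.ball x R))
    (hom : ∀ w, ∃ v ∈ Metric.ball w 2, v ∉ h '' Metric.ball x R) :
    ∀ y ∈ Metric.ball x (R/2), ‖deriv h y‖ ≤ 512 / R := by
  intro y hy
  set s := R/4 with hs
  have hsub : Metric.closedBall y s ⊆ Metric.ball x R := by
    apply Metric.closedBall_subset_ball'
    rw [Metric.mem_ball] at hy
    linarith
  have hd : DifferentiableOn ℂ (deriv h) (Metric.ball x R) := hh.deriv Metric.isOpen_ball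
  have hcont : ContinuousOn (fun z => ‖deriv h z‖ * (s - dist z y)) (Metric.closedBall y s) :=
    ((hd.continuousOn.mono hsub).norm).mul (by fun_prop)
  have hs0 : 0 < s := by positivity
  obtain ⟨a, ha, hmax⟩ := (isCompact_closedBall y s).exists_isMaxOn
    ⟨y, Metric.mem_closedBall_self hs0.le⟩ hcont
  have hmax' : ∀ z ∈ Metric.closedBall y s, ‖deriv h z‖ * (s - dist z y) ≤ ‖deriv h a‖ * (s - dist a y) :=
    fun z hz => hmax hz
  set t := ‖deriv h a‖ * (s - dist a y) with ht
  have hty : ‖deriv h y‖ * s ≤ t := by simpa using hmax' y (Metric.mem_closedBall_self hs0.le)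
  by_contra hcon
  push Not at hcon
  have ht128 : 128 < t := by
    have : 512 / R * s = 128 := by rw [hs]; field_simp; norm_num
    nlinarith
  set m := ‖deriv h a‖ with hm
  set ρ := (s - dist a y)/2 with hρ
  have ha' : dist a y ≤ s := ha
  have hρ0 : 0 < ρ := by
    rcases (show 0 ≤ ρ by rw [hρ]; linarith).eq_or_lt with h | h
    · have : s - dist a y = 0 := by linarith
      rw [this] at ht; linarith
    · exact h
  have htρ : t = 2 * (m * ρ) := by rw [ht, hρ]; ring
  have hm0 : 0 < m := by
    rcases (norm_nonneg (deriv h a)).eq_or_lt with h | h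
    · rw [← hm] at h; rw [← h] at htρ; linarith
    · exact h
  have hb : Metric.ball a ρ ⊆ Metric.closedBall y s := by
    apply Metric.ball_subset_closedBall.trans
    apply Metric.closedBall_subset_closedBall'
    linarith
  have hbd : ∀ z ∈ Metric.ball a ρ, ‖deriv h z‖ ≤ 2 * m := by
    intro z hz
    have h1 := hmax' z (hb hz)
    have h2 : ρ ≤ s - dist z y := by
      have := dist_triangle z a y
      rw [Metric.mem_ball] at hz
      linarith
    have h3 : ‖deriv h z‖ * ρ ≤ 2 * (m * ρ) := by
      rw [← htρ]
      refine le_trans ?_ h1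
      gcongr
    have : ‖deriv h z‖ * ρ ≤ (2 * m) * ρ := by linarith
    exact le_of_mul_le_mul_right this hρ0
  have hmaps : Set.MapsTo (deriv h) (Metric.ball a ρ) (Metric.ball (deriv h a) (4 * m)) := by
    intro z hz
    rw [Metric.mem_ball, dist_eq_norm]
    have := norm_sub_le (deriv h z) (deriv h a)
    have := hbd z hz
    linarith
  have hlip : ∀ z ∈ Metric.closedBall a (ρ/8), ‖deriv h z - deriv h a‖ ≤ m / 2 := by
    intro z hz
    rw [Metric.mem_closedBall] at hz
    have h1 := Complex.dist_le_div_mul_dist_of_mapsTo_ball (hd.mono (hb.trans hsub))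
      (hmaps.mono_right Metric.ball_subset_closedBall)
      (z := z) (by rw [Metric.mem_ball]; linarith)
    rw [dist_eq_norm] at h1
    refine h1.trans ?_
    calc 4 * m / ρ * dist z a ≤ 4 * m / ρ * (ρ/8) := by gcongr
      _ = m / 2 := by field_simp; norm_num
  have hsub2 : Metric.closedBall a (ρ/8) ⊆ Metric.ball x R :=
    (Metric.closedBall_subset_ball (by linarith)).trans (hb.trans hsub)
  have hmv : ∀ z ∈ Metric.closedBall a (ρ/8), ‖(h z - deriv h a * z) - (h a - deriv h a * a)‖ ≤ m/2 * ‖z - a‖ := by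
    intro z hz
    refine (convex_closedBall a (ρ/8)).norm_image_sub_le_of_norm_hasDerivWithin_le
      (f := fun z => h z - deriv h a * z) (f' := fun z => deriv h z - deriv h a) ?_ hlip
      (Metric.mem_closedBall_self (by positivity)) hz
    intro z hz
    have h1 := (hh.differentiableAt (Metric.isOpen_ball.mem_nhds (hsub2 hz))).hasDerivAt
    have h2 := (hasDerivAt_id z).const_mul (deriv h a)
    have h3 := (h1.sub h2).hasDerivWithinAt (s := Metric.closedBall a (ρ/8))
    rw [mul_one] at h3
    exact h3
  have hlow : ∀ z ∈ Metric.closedBall a (ρ/8), m/2 * ‖z - a‖ ≤ ‖h z - h a‖ := by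
    intro z hz
    have h1 := hmv z hz
    have h2 : deriv h a * (z - a) = (h z - h a) - ((h z - deriv h a * z) - (h a - deriv h a * a)) := by ring
    have h3 := norm_sub_le (h z - h a) ((h z - deriv h a * z) - (h a - deriv h a * a))
    rw [← h2, norm_mul] at h3
    linarith
  have hdc : DiffContOnCl ℂ h (Metric.ball a (ρ/8)) := by
    apply DifferentiableOn.diffContOnCl
    rw [closure_ball _ (by positivity)]
    exact hh.mono hsub2
  have hcov := hdc.ball_subset_image_closedBall (ε := m * ρ / 16) (by positivity) (by
    intro z hz
    have h1 := hlow z (Metric.sphere_subset_closedBall hz)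
    rw [mem_sphere_iff_norm] at hz
    rw [hz] at h1
    linarith) (by
    have hda : HasDerivAt h (deriv h a) a :=
      (hh.differentiableAt (Metric.isOpen_ball.mem_nhds (hsub2 (Metric.mem_closedBall_self (by positivity))))).hasDerivAt
    have := hda.eventually_ne (c := h a) (norm_pos_iff.1 hm0)
    exact this.frequently.filter_mono nhdsWithin_le_nhds)
  obtain ⟨v, hv, hv'⟩ := hom (h a)
  refine hv' (Set.image_mono hsub2 (hcov (Metric.ball_subset_ball ?_ hv)))
  linarith

lemma schottky_aux (M : ℝ) : ∃ B : ℝ, ∀ (f : ℂ → ℂ) (x : ℂ) (R : ℝ), 0 < R →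
    DifferentiableOn ℂ f (Metric.ball x R) → (∀ z ∈ Metric.ball x R, f z ≠ 0 ∧ f z ≠ 1) →
    1/2 ≤ ‖f x‖ → ‖f x‖ ≤ M → ∀ z ∈ Metric.ball x (R/2), ‖f z‖ ≤ B := by
  set A : ℝ := Real.log 2 + |Real.log M| + Real.pi with hA
  refine ⟨Real.exp (2 * Real.pi * (Real.exp (3 + 2 * A + 256)) ^ 2), ?_⟩
  intro f x R hR hf hom hx1 hx2 z hz
  have hpi := Real.pi_pos
  have hpi3 := Real.pi_gt_three
  have hxm : x ∈ Metric.ball x R := Metric.mem_ball_self hR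
  obtain ⟨l, hl, hlx, hle⟩ := exists_log hR hf (fun z hz => (hom z hz).1) (Complex.log (f x))
    (Complex.exp_log (hom x hxm).1)
  have hlxA : ‖l x‖ ≤ A := by
    rw [hlx]
    refine (Complex.norm_le_abs_re_add_abs_im _).trans ?_
    have h1 : |(Complex.log (f x)).im| ≤ Real.pi := by
      rw [Complex.log_im]; exact Complex.abs_arg_le_pi _
    have h2 : |(Complex.log (f x)).re| ≤ Real.log 2 + |Real.log M| := by
      rw [Complex.log_re, abs_le]
      have h3 : Real.log (1/2) ≤ Real.log ‖f x‖ := Real.log_le_log (by norm_num) hx1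
      have h4 : Real.log ‖f x‖ ≤ Real.log M := Real.log_le_log (by linarith) hx2
      have h5 : Real.log (1/2) = - Real.log 2 := by rw [one_div, Real.log_inv]
      have h6 := le_abs_self (Real.log M)
      have h7 := abs_nonneg (Real.log M)
      have h8 : 0 ≤ Real.log 2 := Real.log_nonneg (by norm_num)
      constructor <;> linarith
    linarith
  have h2pi : (2 * Real.pi * Complex.I : ℂ) ≠ 0 := Complex.two_pi_I_ne_zero
  set F : ℂ → ℂ := fun z => l z / (2 * Real.pi * Complex.I) with hF
  have hlF : ∀ z, l z = 2 * Real.pi * Complex.I * F z := by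
    intro z; rw [hF]; field_simp
  have hFd : DifferentiableOn ℂ F (Metric.ball x R) := hl.div_const _
  have hFint : ∀ z ∈ Metric.ball x R, ∀ n : ℤ, F z ≠ n := by
    intro z hz n hn
    apply (hom z hz).2
    rw [← hle z hz, hlF, hn, mul_comm]
    exact Complex.exp_int_mul_two_pi_mul_I n
  have hnormlF : ∀ z, ‖l z‖ = 2 * Real.pi * ‖F z‖ := by
    intro z
    rw [hlF, norm_mul, norm_mul, norm_mul, Complex.norm_I, Complex.norm_real]
    simp [abs_of_pos hpi]
  have hFxA : ‖F x‖ ≤ A := by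
    have h1 := hnormlF x
    have h2 := norm_nonneg (F x)
    nlinarith
  have hF0 : ∀ z ∈ Metric.ball x R, F z ≠ 0 := fun z hz => by simpa using hFint z hz 0
  have hF1 : ∀ z ∈ Metric.ball x R, F z - 1 ≠ 0 := fun z hz => by
    simpa [sub_eq_zero] using hFint z hz 1
  obtain ⟨lp, hlp, -, hlpe⟩ := exists_log hR hFd hF0 _ (Complex.exp_log (hF0 x hxm))
  obtain ⟨lq, hlq, -, hlqe⟩ := exists_log hR (hFd.sub_const 1) hF1 _ (Complex.exp_log (hF1 x hxm))
  set p : ℂ → ℂ := fun z => Complex.exp (lp z / 2) with hp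
  set q : ℂ → ℂ := fun z => Complex.exp (lq z / 2) with hq
  have hp2 : ∀ z ∈ Metric.ball x R, p z ^ 2 = F z := by
    intro z hz
    rw [← hlpe z hz, hp, ← Complex.exp_nat_mul]; congr 1; push_cast; ring
  have hq2 : ∀ z ∈ Metric.ball x R, q z ^ 2 = F z - 1 := by
    intro z hz
    rw [← hlqe z hz, hq, ← Complex.exp_nat_mul]; congr 1; push_cast; ring
  have hpd : DifferentiableOn ℂ p (Metric.ball x R) := (hlp.div_const 2).cexp
  have hqd : DifferentiableOn ℂ q (Metric.ball x R) := (hlq.div_const 2).cexp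
  have hpq : ∀ z ∈ Metric.ball x R, (p z - q z) * (p z + q z) = 1 := by
    intro z hz
    linear_combination hp2 z hz - hq2 z hz
  have hu0 : ∀ z ∈ Metric.ball x R, p z - q z ≠ 0 := fun z hz => left_ne_zero_of_mul_eq_one (hpq z hz)
  obtain ⟨φ, hφd, -, hφe⟩ := exists_log hR (hpd.sub hqd) hu0 _ (Complex.exp_log (hu0 x hxm))
  have hφe' : ∀ z ∈ Metric.ball x R, Complex.exp (- φ z) = p z + q z := by
    intro z hz
    rw [Complex.exp_neg, hφe z hz]
    exact inv_eq_of_mul_eq_one_right (hpq z hz)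
  have hcosh : ∀ z ∈ Metric.ball x R, Complex.cosh (φ z) ^ 2 = F z := by
    intro z hz
    have h1 := hφe z hz
    simp only [Pi.sub_apply] at h1
    rw [← hp2 z hz, Complex.cosh, hφe' z hz, h1]
    ring
  have hbl := bloch hR hφd (by
    intro w
    obtain ⟨v, hv, n, hn⟩ := aux_net w
    refine ⟨v, hv, ?_⟩
    rintro ⟨y, hy, rfl⟩
    exact hFint y hy n (by rw [← hcosh y hy, hn]))
  have hsub : Metric.ball x (R/2) ⊆ Metric.ball x R := Metric.ball_subset_ball (by linarith)
  have hlip : ‖φ z - φ x‖ ≤ 512 / R * ‖z - x‖ :=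
    (convex_ball x (R/2)).norm_image_sub_le_of_norm_deriv_le
      (fun y hy => hφd.differentiableAt (Metric.isOpen_ball.mem_nhds (hsub hy))) hbl
      (Metric.mem_ball_self (by positivity)) hz
  have hlip2 : ‖φ z - φ x‖ ≤ 256 := by
    rw [Metric.mem_ball, dist_eq_norm] at hz
    calc _ ≤ _ := hlip
      _ ≤ 512 / R * (R/2) := by gcongr
      _ = 256 := by field_simp; norm_num
  have hnp : ‖p x‖ ≤ 1 + A := by
    have h1 : ‖p x‖ ^ 2 = ‖F x‖ := by rw [← norm_pow, hp2 x hxm]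
    nlinarith [norm_nonneg (p x)]
  have hnq : ‖q x‖ ≤ 2 + A := by
    have h1 : ‖q x‖ ^ 2 = ‖F x - 1‖ := by rw [← norm_pow, hq2 x hxm]
    have h2 := norm_sub_le (F x) 1
    rw [norm_one] at h2
    nlinarith [norm_nonneg (q x)]
  have hre : |(φ x).re| ≤ 3 + 2 * A := by
    have h1 : Real.exp ((φ x).re) ≤ 3 + 2 * A := by
      rw [← Complex.norm_exp, hφe x hxm]
      refine (norm_sub_le _ _).trans ?_
      linarith
    have h2 : Real.exp (-(φ x).re) ≤ 3 + 2 * A := by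
      rw [← Complex.neg_re, ← Complex.norm_exp, hφe' x hxm]
      refine (norm_add_le _ _).trans ?_
      linarith
    rw [abs_le]
    have h3 := Real.add_one_le_exp ((φ x).re)
    have h4 := Real.add_one_le_exp (-(φ x).re)
    constructor <;> linarith
  have hrez : |(φ z).re| ≤ 3 + 2 * A + 256 := by
    have h1 := Complex.abs_re_le_norm (φ z - φ x)
    rw [Complex.sub_re] at h1
    have h2 := abs_add_le ((φ z).re - (φ x).re) ((φ x).re)
    rw [sub_add_cancel] at h2
    linarith
  have hFz : ‖F z‖ ≤ (Real.exp (3 + 2 * A + 256)) ^ 2 := by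
    rw [← hcosh z (hsub hz), norm_pow]
    gcongr
    rw [Complex.cosh, norm_div]
    have h1 : ‖Complex.exp (φ z)‖ ≤ Real.exp (3 + 2 * A + 256) := by
      rw [Complex.norm_exp]; gcongr; exact (le_abs_self _).trans hrez
    have h2 : ‖Complex.exp (- φ z)‖ ≤ Real.exp (3 + 2 * A + 256) := by
      rw [Complex.norm_exp, Complex.neg_re]; gcongr; exact (neg_le_abs _).trans hrez
    have h3 := norm_add_le (Complex.exp (φ z)) (Complex.exp (- φ z))
    have h4 : ‖(2:ℂ)‖ = 2 := by norm_num
    rw [h4]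
    linarith
  rw [← hle z (hsub hz), Complex.norm_exp]
  gcongr
  refine (Complex.re_le_norm _).trans ?_
  rw [hnormlF]
  gcongr

lemma schottky (M : ℝ) : ∃ B : ℝ, ∀ (f : ℂ → ℂ) (x : ℂ) (R : ℝ), 0 < R →
    DifferentiableOn ℂ f (Metric.ball x R) → (∀ z ∈ Metric.ball x R, f z ≠ 0 ∧ f z ≠ 1) →
    ‖f x‖ ≤ M → ∀ z ∈ Metric.ball x (R/2), ‖f z‖ ≤ B := by
  obtain ⟨B, hB⟩ := schottky_aux (M + 1)
  refine ⟨B + 1, ?_⟩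
  intro f x R hR hf hom hM z hz
  rcases le_total (1/2) ‖f x‖ with h | h
  · have := hB f x R hR hf hom h (by linarith) z hz
    linarith
  · have h1 := norm_sub_norm_le 1 (f x)
    have h2 := norm_sub_le 1 (f x)
    rw [norm_one] at h1 h2
    have := hB (fun z => 1 - f z) x R hR (hf.const_sub 1) (fun z hz =>
      ⟨fun h => (hom z hz).2 (sub_eq_zero.1 h).symm, fun h => (hom z hz).1 (by simpa using h)⟩)
      (by linarith) (by linarith) z hz
    have h3 := norm_sub_norm_le (f z) 1
    rw [norm_sub_rev, norm_one] at h3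
    linarith


/-- points whose whole orbit stays in `D` -/
def stayIn (f : ℂ → ℂ) (D : Set ℂ) : Set ℂ := {z | ∀ k, f^[k] z ∈ D}

/-- points whose orbit stays in `closure D` up to time `k` -/
def stayUpTo (f : ℂ → ℂ) (D : Set ℂ) (k : ℕ) : Set ℂ := {z | ∀ j ≤ k, f^[j] z ∈ closure D}

lemma isClosed_stayUpTo {f : ℂ → ℂ} (hf : Continuous f) (D : Set ℂ) (k : ℕ) :
    IsClosed (stayUpTo f D k) := by
  have : stayUpTo f D k = ⋂ j, ⋂ (_ : j ≤ k), f^[j] ⁻¹' closure D := by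
    ext z; simp [stayUpTo]
  rw [this]
  exact isClosed_iInter fun j => isClosed_iInter fun _ => isClosed_closure.preimage (hf.iterate j)

lemma isCompact_stayUpTo {f : ℂ → ℂ} (hf : Continuous f) {D : Set ℂ} (hD : Bornology.IsBounded D) (k : ℕ) :
    IsCompact (stayUpTo f D k) :=
  hD.isCompact_closure.of_isClosed_subset (isClosed_stayUpTo hf D k) fun z hz => hz 0 (Nat.zero_le k)

lemma mem_of_closure {f : ℂ → ℂ} {D : Set ℂ} (hDo : IsOpen D)
    (hb : ∀ z ∈ frontier D, f z ∉ closure D) {z : ℂ} (h1 : z ∈ closure D) (h2 : f z ∈ closure D) :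
    z ∈ D := by
  by_contra h
  exact hb z (by rw [hDo.frontier_eq]; exact ⟨h1, h⟩) h2

lemma stayIn_eq {f : ℂ → ℂ} {D : Set ℂ} (hDo : IsOpen D)
    (hb : ∀ z ∈ frontier D, f z ∉ closure D) : stayIn f D = ⋂ k, stayUpTo f D k := by
  ext z
  simp only [stayIn, stayUpTo, Set.mem_iInter, Set.mem_ofPred_eq]
  constructor
  · intro h k j _; exact subset_closure (h j)
  · intro h k
    apply mem_of_closure hDo hb (h k k le_rfl)
    rw [← Function.iterate_succ_apply' f]
    exact h (k+1) (k+1) le_rfl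

lemma isCompact_stayIn {f : ℂ → ℂ} (hf : Continuous f) {D : Set ℂ} (hDo : IsOpen D)
    (hD : Bornology.IsBounded D) (hb : ∀ z ∈ frontier D, f z ∉ closure D) :
    IsCompact (stayIn f D) := by
  rw [stayIn_eq hDo hb]
  exact (isCompact_stayUpTo hf hD 0).of_isClosed_subset
    (isClosed_iInter fun k => isClosed_stayUpTo hf D k) (Set.iInter_subset _ 0)

lemma isOpenMap_iterate {f : ℂ → ℂ} (hfo : IsOpenMap f) (k : ℕ) : IsOpenMap f^[k] := by
  induction k with
  | zero => exact IsOpenMap.id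
  | succ k ih => rw [Function.iterate_succ]; exact ih.comp hfo

lemma cover {f : ℂ → ℂ} (hf : Continuous f) (hfo : IsOpenMap f) {D : Set ℂ} (hDo : IsOpen D)
    (hD : Bornology.IsBounded D) (hDc : IsPreconnected D) (hb : ∀ z ∈ frontier D, f z ∉ closure D)
    {U : Set ℂ} (hU : IsOpen U) (k : ℕ) (hUk : frontier U ∩ stayUpTo f D k = ∅)
    (hne : ∃ z ∈ U, ∀ j ≤ k, f^[j] z ∈ D) :
    ∀ w ∈ D, ∃ z ∈ U, (∀ j ≤ k, f^[j] z ∈ D) ∧ f^[k] z = w := by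
  set N : Set ℂ := {z | z ∈ U ∧ ∀ j ≤ k, f^[j] z ∈ D} with hN
  have hNo : IsOpen N := by
    have : N = U ∩ ⋂ j ∈ Finset.range (k+1), f^[j] ⁻¹' D := by
      ext z; simp [hN, Nat.lt_succ_iff]
    rw [this]
    exact hU.inter (isOpen_biInter_finset fun j _ => hDo.preimage (hf.iterate j))
  have him : IsOpen (f^[k] '' N) := (isOpenMap_iterate hfo k) _ hNo
  have hcl : IsCompact (f^[k] '' (closure U ∩ stayUpTo f D k)) :=
    ((isCompact_stayUpTo hf hD k).inter_left isClosed_closure).image (hf.iterate k)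
  have hkey : D ∩ f^[k] '' (closure U ∩ stayUpTo f D k) ⊆ f^[k] '' N := by
    rintro w ⟨hwD, z, ⟨hzU, hz⟩, rfl⟩
    refine ⟨z, ⟨?_, ?_⟩, rfl⟩
    · by_contra h
      have : z ∈ frontier U ∩ stayUpTo f D k := ⟨by rw [hU.frontier_eq]; exact ⟨hzU, h⟩, hz⟩
      rw [hUk] at this; exact this
    · intro j hj
      rcases hj.eq_or_lt with rfl | hlt
      · exact hwD
      · apply mem_of_closure hDo hb (hz j hj)
        rw [← Function.iterate_succ_apply' f]
        exact hz (j+1) hlt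
  have hsub : f^[k] '' N ⊆ f^[k] '' (closure U ∩ stayUpTo f D k) :=
    Set.image_mono fun z hz => ⟨subset_closure hz.1, fun j hj => subset_closure (hz.2 j hj)⟩
  have hfin : D ⊆ f^[k] '' N := by
    by_contra hcon
    obtain ⟨z0, hz0, hz0'⟩ := hne
    obtain ⟨w1, hw1, hw1'⟩ := Set.not_subset.1 hcon
    obtain ⟨w, hw, hw1, hw2⟩ := hDc _ _ him hcl.isClosed.isOpen_compl
      (by
        intro w hw
        by_cases h : w ∈ f^[k] '' (closure U ∩ stayUpTo f D k)
        · exact Or.inl (hkey ⟨hw, h⟩)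
        · exact Or.inr h)
      ⟨f^[k] z0, hz0' k le_rfl, z0, ⟨hz0, hz0'⟩, rfl⟩
      ⟨w1, hw1, fun h => hw1' (hkey ⟨hw1, h⟩)⟩
    exact hw2 (hsub hw1)
  intro w hw
  obtain ⟨z, hz, rfl⟩ := hfin hw
  exact ⟨z, hz.1, hz.2, rfl⟩

lemma stayUpTo_anti (f : ℂ → ℂ) (D : Set ℂ) (k : ℕ) : stayUpTo f D (k+1) ⊆ stayUpTo f D k :=
  fun _ hz j hj => hz j (by omega)

lemma stayIn_nonempty {f : ℂ → ℂ} (hf : Continuous f) (hfo : IsOpenMap f) {D : Set ℂ} (hDo : IsOpen D)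
    (hD : Bornology.IsBounded D) (hDc : IsPreconnected D) (hb : ∀ z ∈ frontier D, f z ∉ closure D)
    {p : ℂ} (hp : p ∈ D) (hfp : f p ∈ D) : (stayIn f D).Nonempty := by
  have h1 : ∀ w ∈ D, ∃ z ∈ D, f z = w := by
    intro w hw
    obtain ⟨z, -, hz, hz'⟩ := cover hf hfo hDo hD hDc hb isOpen_univ 1 (by simp)
      ⟨p, trivial, fun j hj => by interval_cases j <;> simpa⟩ w hw
    exact ⟨z, hz 0 (by omega), hz'⟩
  have h2 : ∀ k, ∃ z, ∀ j ≤ k, f^[j] z ∈ D := by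
    intro k
    induction k with
    | zero => exact ⟨p, fun j hj => by obtain rfl : j = 0 := by omega
                                       exact hp⟩
    | succ k ih =>
      obtain ⟨z, hz⟩ := ih
      obtain ⟨y, hy, rfl⟩ := h1 z (hz 0 (by omega))
      refine ⟨y, fun j hj => ?_⟩
      cases j with
      | zero => exact hy
      | succ j => exact hz j (by omega)
  rw [stayIn_eq hDo hb]
  refine IsCompact.nonempty_iInter_of_sequence_nonempty_isCompact_isClosed _ (stayUpTo_anti f D) ?_
    (isCompact_stayUpTo hf hD 0) (isClosed_stayUpTo hf D)
  intro k
  obtain ⟨z, hz⟩ := h2 k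
  exact ⟨z, fun j hj => subset_closure (hz j hj)⟩

lemma clopen_blowup {f : ℂ → ℂ} (hf : Continuous f) (hfo : IsOpenMap f) {D : Set ℂ} (hDo : IsOpen D)
    (hD : Bornology.IsBounded D) (hDc : IsPreconnected D) (hb : ∀ z ∈ frontier D, f z ∉ closure D)
    {A A' : Set ℂ} (hA : IsCompact A) (hA' : IsCompact A') (hdis : Disjoint A A')
    (hAA : A ∪ A' = stayIn f D) (hne : A.Nonempty) : ∃ k, stayIn f D ⊆ f^[k] '' A := by
  obtain ⟨U, V, hU, hV, hAU, hAV, hUV⟩ := SeparatedNhds.of_isCompact_isCompact hA hA' hdis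
  have hfr : frontier U ∩ stayIn f D = ∅ := by
    rw [← hAA, Set.eq_empty_iff_forall_notMem]
    rintro z ⟨hz, h | h⟩
    · rw [hU.frontier_eq] at hz; exact hz.2 (hAU h)
    · exact Set.disjoint_left.1 (hUV.closure_left hV) (frontier_subset_closure hz) (hAV h)
  obtain ⟨k, hk⟩ : ∃ k, frontier U ∩ stayUpTo f D k = ∅ := by
    by_contra hcon
    push Not at hcon
    have := IsCompact.nonempty_iInter_of_sequence_nonempty_isCompact_isClosed
      (fun k => frontier U ∩ stayUpTo f D k)
      (fun k => Set.inter_subset_inter_right _ (stayUpTo_anti f D k)) hcon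
      ((isCompact_stayUpTo hf hD 0).inter_left isClosed_frontier)
      (fun k => isClosed_frontier.inter (isClosed_stayUpTo hf D k))
    rw [← Set.inter_iInter, ← stayIn_eq hDo hb, hfr] at this
    exact Set.not_nonempty_empty this
  refine ⟨k, fun w hw => ?_⟩
  obtain ⟨a, ha⟩ := hne
  have haK : a ∈ stayIn f D := by rw [← hAA]; exact Or.inl ha
  obtain ⟨z, hzU, hz, hzw⟩ := cover hf hfo hDo hD hDc hb hU k hk ⟨a, hAU ha, fun j _ => haK j⟩ w (hw 0)
  have hzK : z ∈ stayIn f D := by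
    intro j
    rcases le_total j k with h | h
    · exact hz j h
    · obtain ⟨i, rfl⟩ := Nat.exists_eq_add_of_le' h
      rw [Function.iterate_add_apply, hzw]
      exact hw i
  refine ⟨z, ?_, hzw⟩
  rw [← hAA] at hzK
  rcases hzK with h | h
  · exact h
  · exact absurd (hAV h) (Set.disjoint_left.1 hUV hzU)

/-- Baire step. -/
lemma exists_clopen_in_component {X K : Set ℂ} (hX : IsCompact X) (hXne : X.Nonempty) (hXK : X ⊆ K)
    (hS : {C : Set ℂ | ∃ w ∈ K, C = connectedComponentIn K w}.Countable) :
    ∃ A A' : Set ℂ, IsCompact A ∧ IsCompact A' ∧ Disjoint A A' ∧ A ∪ A' = X ∧ A.Nonempty ∧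
      ∃ w ∈ K, A ⊆ connectedComponentIn K w := by
  set S := {C : Set ℂ | ∃ w ∈ K, C = connectedComponentIn K w}
  have : Countable S := hS
  have : CompactSpace X := isCompact_iff_compactSpace.1 hX
  have : Nonempty X := hXne.to_subtype
  let F : S → Set (ConnectedComponents X) := fun C =>
    ConnectedComponents.mk '' {x : X | (x : ℂ) ∈ (C : Set ℂ)}
  have hFc : ∀ C, IsClosed (F C) := by
    rintro ⟨C, w, hw, rfl⟩
    have h1 : IsClosed {x : X | (x : ℂ) ∈ connectedComponentIn K w} := by
      have e : {x : X | (x : ℂ) ∈ connectedComponentIn K w}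
          = (Set.inclusion hXK) ⁻¹' (connectedComponent (⟨w, hw⟩ : K)) := by
        ext x
        rw [Set.mem_ofPred_eq, connectedComponentIn_eq_image hw]
        constructor
        · rintro ⟨y, hy, hyx⟩
          have : Set.inclusion hXK x = y := Subtype.ext hyx.symm
          rw [Set.mem_preimage, this]; exact hy
        · intro h
          exact ⟨_, h, rfl⟩
      rw [e]
      exact isClosed_connectedComponent.preimage (continuous_inclusion hXK)
    exact (h1.isCompact.image ConnectedComponents.continuous_coe).isClosed
  have hFu : ⋃ C, F C = Set.univ := by
    rw [Set.eq_univ_iff_forall]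
    intro c
    obtain ⟨x, rfl⟩ := ConnectedComponents.surjective_coe c
    exact Set.mem_iUnion.2 ⟨⟨_, x, hXK x.2, rfl⟩, x, mem_connectedComponentIn (hXK x.2), rfl⟩
  obtain ⟨⟨C, w, hw, rfl⟩, c, hc⟩ := nonempty_interior_of_iUnion_of_closed hFc hFu
  obtain ⟨O, hO, hcO, hOF⟩ := compact_exists_isClopen_in_isOpen isOpen_interior hc
  have hP : IsClopen ((ConnectedComponents.mk : X → _) ⁻¹' O) := hO.preimage ConnectedComponents.continuous_coe
  refine ⟨Subtype.val '' ((ConnectedComponents.mk : X → _) ⁻¹' O),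
    Subtype.val '' ((ConnectedComponents.mk : X → _) ⁻¹' O)ᶜ,
    hP.isClosed.isCompact.image continuous_subtype_val,
    hP.compl.isClosed.isCompact.image continuous_subtype_val, ?_, ?_, ?_, w, hw, ?_⟩
  · exact (Set.disjoint_image_iff Subtype.val_injective).2 disjoint_compl_right
  · rw [← Set.image_union, Set.union_compl_self, Set.image_univ, Subtype.range_coe]
  · obtain ⟨x, rfl⟩ := ConnectedComponents.surjective_coe c
    exact ⟨x, x, hcO, rfl⟩
  · rintro _ ⟨x, hx, rfl⟩
    obtain ⟨y, hy, hyx⟩ := interior_subset (hOF hx)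
    have hxy : x ∈ connectedComponent y := by
      rw [ConnectedComponents.coe_eq_coe] at hyx
      rw [hyx]; exact mem_connectedComponent
    have hy' : (y : ℂ) ∈ connectedComponentIn K w := hy
    rw [connectedComponentIn_eq hy']
    have hpre : IsPreconnected (Subtype.val '' connectedComponent y : Set ℂ) :=
      isPreconnected_connectedComponent.image _ continuous_subtype_val.continuousOn
    refine hpre.subset_connectedComponentIn ⟨y, mem_connectedComponent, rfl⟩ ?_ ⟨x, hxy, rfl⟩
    rintro _ ⟨v, -, rfl⟩
    exact hXK v.2

lemma not_locally_bounded {f : ℂ → ℂ} (hf : Differentiable ℂ f) {D : Set ℂ} (hDo : IsOpen D)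
    (hD : Bornology.IsBounded D) (hb : ∀ z ∈ frontier D, f z ∉ closure D) {x : ℂ}
    (hx : x ∈ frontier (stayIn f D)) {ρ B : ℝ} (hρ : 0 < ρ)
    (hB : ∀ k, ∀ z ∈ Metric.ball x ρ, ‖f^[k] z‖ ≤ B) : False := by
  have hK := isCompact_stayIn hf.continuous hDo hD hb
  have hxK : x ∈ stayIn f D := hK.isClosed.frontier_subset hx
  obtain ⟨δ, hδ, hδD⟩ := hK.exists_thickening_subset_open hDo (fun z hz => hz 0)
  have hB0 : 0 ≤ B := (norm_nonneg _).trans (hB 0 x (Metric.mem_ball_self hρ))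
  have hη : 0 < min ρ (δ * ρ / (2 * B + 1)) := by positivity
  apply hx.2
  rw [mem_interior_iff_mem_nhds]
  refine mem_of_superset (Metric.ball_mem_nhds x hη) ?_
  intro z hz k
  rw [Metric.mem_ball, lt_min_iff] at hz
  apply hδD
  rw [Metric.mem_thickening_iff]
  refine ⟨f^[k] x, fun j => by rw [← Function.iterate_add_apply]; exact hxK _, ?_⟩
  have h1 := Complex.dist_le_div_mul_dist_of_mapsTo_ball (f := f^[k]) (c := x) (R₁ := ρ) (R₂ := 2 * B) (z := z)
    (hf.iterate k).differentiableOn (fun y hy => by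
      rw [Metric.mem_closedBall, dist_eq_norm]
      have h2 := norm_sub_le (f^[k] y) (f^[k] x)
      have h3 := hB k y hy
      have h4 := hB k x (Metric.mem_ball_self hρ)
      linarith) hz.1
  refine h1.trans_lt ?_
  have h2 : dist z x * (2 * B + 1) < δ * ρ := (lt_div_iff₀ (by positivity)).1 hz.2
  rw [div_mul_eq_mul_div, div_lt_iff₀ hρ]
  have := dist_nonneg (x := z) (y := x)
  nlinarith

lemma omits_at_most_one {f : ℂ → ℂ} (hf : Differentiable ℂ f) {D : Set ℂ} (hDo : IsOpen D)
    (hD : Bornology.IsBounded D) (hb : ∀ z ∈ frontier D, f z ∉ closure D) {x : ℂ}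
    (hx : x ∈ frontier (stayIn f D)) {V : Set ℂ} (hV : IsOpen V) (hxV : x ∈ V) :
    ∃ e : ℂ, ∀ w, w ≠ e → ∃ k, ∃ v ∈ V, f^[k] v = w := by
  by_contra hcon
  push Not at hcon
  obtain ⟨a, -, ha⟩ := hcon 0
  obtain ⟨b, hba, hb'⟩ := hcon a
  obtain ⟨R, hR, hRV⟩ := Metric.isOpen_iff.1 hV x hxV
  have hxK : x ∈ stayIn f D := (isCompact_stayIn hf.continuous hDo hD hb).isClosed.frontier_subset hx
  obtain ⟨M, hM⟩ := hD.exists_norm_le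
  have hba0 : b - a ≠ 0 := sub_ne_zero.2 hba
  have hn : 0 < ‖b - a‖ := norm_pos_iff.2 hba0
  obtain ⟨B, hB⟩ := schottky ((M + ‖a‖) / ‖b - a‖)
  refine not_locally_bounded hf hDo hD hb hx (ρ := R/2) (B := B * ‖b - a‖ + ‖a‖) (by positivity) ?_
  intro k z hz
  have h1 := hB (fun z => (f^[k] z - a) / (b - a)) x R hR
    (((hf.iterate k).sub_const a).div_const (b - a)).differentiableOn (fun z hz => by
      constructor
      · intro h
        rw [div_eq_zero_iff, or_iff_left hba0, sub_eq_zero] at h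
        exact ha k z (hRV hz) h
      · intro h
        rw [div_eq_one_iff_eq hba0, sub_left_inj] at h
        exact hb' k z (hRV hz) h) (by
      rw [norm_div]
      gcongr
      refine (norm_sub_le _ _).trans ?_
      have := hM _ (hxK k)
      linarith) z hz
  rw [norm_div, div_le_iff₀ hn] at h1
  have h2 := norm_sub_norm_le (f^[k] z) a
  linarith

lemma mem_Kf_iterate {f : ℂ → ℂ} {z : ℂ} (k : ℕ) (hz : z ∈ boundedOrbitSet f) :
    f^[k] z ∈ boundedOrbitSet f := by
  have hz' : Bornology.IsBounded (Set.range fun n : ℕ => f^[n] z) := hz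
  refine Bornology.IsBounded.subset hz' ?_
  rintro _ ⟨n, rfl⟩
  exact ⟨n + k, Function.iterate_add_apply f n k z⟩

lemma mem_Kf_of_iterate {f : ℂ → ℂ} {z : ℂ} (k : ℕ) (hz : f^[k] z ∈ boundedOrbitSet f) :
    z ∈ boundedOrbitSet f := by
  have h1 : (Set.range fun n : ℕ => f^[n] z) ⊆
      (fun n => f^[n] z) '' (Set.Iio k) ∪ Set.range fun n : ℕ => f^[n] (f^[k] z) := by
    rintro _ ⟨n, rfl⟩
    rcases lt_or_ge n k with h | h
    · exact Or.inl ⟨n, h, rfl⟩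
    · obtain ⟨i, rfl⟩ := Nat.exists_eq_add_of_le' h
      exact Or.inr ⟨i, (Function.iterate_add_apply f i k z).symm⟩
  have hz' : Bornology.IsBounded (Set.range fun n : ℕ => f^[n] (f^[k] z)) := hz
  exact Bornology.IsBounded.subset
    ((((Set.finite_Iio k).image _).isBounded).union hz') h1

/-- For a strongly polynomial-like transcendental entire function, either `K(f)` is
connected, or every open neighbourhood of every point of `∂K(f)` meets uncountably many
connected components of `K(f)`. -/
theorem Kf_connected_or_uncountably_many_components_of_spl (f : ℂ → ℂ)
    (hf : TranscendentalEntire f) (hspl : StronglyPolynomialLike f) :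
    IsConnected (boundedOrbitSet f) ∨
      ∀ z ∈ frontier (boundedOrbitSet f), ∀ V : Set ℂ, IsOpen V → z ∈ V →
        ¬ {C : Set ℂ |
            (∃ w ∈ boundedOrbitSet f, C = connectedComponentIn (boundedOrbitSet f) w) ∧
            (C ∩ V).Nonempty}.Countable := by
  obtain ⟨hd, hnp⟩ := hf
  obtain ⟨D, hDo, hDc, hDb, -, hDs, hDu, hsur⟩ := hspl
  have hc := hd.continuous
  have hb : ∀ n, ∀ z ∈ frontier (D n), f z ∉ closure (D n) := by
    intro n z hz hfz
    obtain ⟨w, hw, hsub, -⟩ := hsur n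
    exact connectedComponentIn_subset _ _ (hsub hfz) ⟨z, hz, rfl⟩
  have hfo : IsOpenMap f := by
    have han : AnalyticOnNhd ℂ f Set.univ := fun z _ => hd.analyticAt z
    rcases han.is_constant_or_isOpenMap with ⟨w, hw⟩ | h
    · exact absurd ⟨Polynomial.C w, fun z => by simpa using hw z⟩ hnp
    · exact h
  have hmono : Monotone D := monotone_nat_of_le_succ fun n => subset_closure.trans (hDs n)
  have hmem : ∀ z, ∃ n, z ∈ D n := fun z => by
    have : z ∈ ⋃ n, D n := by rw [hDu]; trivial
    exact Set.mem_iUnion.1 this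
  set K := boundedOrbitSet f with hK
  have hKmono : ∀ {m n : ℕ}, m ≤ n → stayIn f (D m) ⊆ stayIn f (D n) :=
    fun h z hz k => hmono h (hz k)
  have hKn : ∀ n, stayIn f (D n) ⊆ K := by
    intro n z hz
    refine (hDb n).subset ?_
    rintro _ ⟨k, rfl⟩
    exact hz k
  have hKex : ∀ z ∈ K, ∃ n, z ∈ stayIn f (D n) := by
    intro z hz
    have hz' : Bornology.IsBounded (Set.range fun n : ℕ => f^[n] z) := hz
    obtain ⟨n, hn⟩ := hz'.isCompact_closure.elim_directed_cover D hDo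
      (by rw [hDu]; exact Set.subset_univ _) hmono.directed_le
    exact ⟨n, fun k => hn (subset_closure ⟨k, rfl⟩)⟩
  obtain ⟨n0, x0, hx0⟩ : ∃ n0, (stayIn f (D n0)).Nonempty := by
    obtain ⟨m, hm⟩ := hmem 0
    obtain ⟨m', hm'⟩ := hmem (f 0)
    exact ⟨max m m', stayIn_nonempty hc hfo (hDo _) (hDb _) (hDc _).isPreconnected (hb _)
      (hmono (le_max_left _ _) hm) (hmono (le_max_right _ _) hm')⟩
  rw [or_iff_not_imp_right]
  intro hcon
  push Not at hcon
  obtain ⟨z, hz, V, hV, hzV, hcount⟩ := hcon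
  -- a frontier point of some `stayIn f (D n)` in `V`
  obtain ⟨n, x, hxV, hx⟩ : ∃ n, ∃ x ∈ V, x ∈ frontier (stayIn f (D n)) := by
    obtain ⟨r, hr, hrV⟩ := Metric.isOpen_iff.1 hV z hzV
    obtain ⟨y, hyB, hyK⟩ := mem_closure_iff.1 hz.1 _ Metric.isOpen_ball (Metric.mem_ball_self hr)
    obtain ⟨n, hn⟩ := hKex y hyK
    have hnot : ∃ y' ∈ Metric.ball z r, y' ∉ K := by
      by_contra h
      push Not at h
      exact hz.2 (mem_interior.2 ⟨_, h, Metric.isOpen_ball, Metric.mem_ball_self hr⟩)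
    obtain ⟨y', hy'B, hy'K⟩ := hnot
    have hy'n : y' ∉ stayIn f (D n) := fun h => hy'K (hKn n h)
    obtain ⟨x, hxB, hx⟩ : ∃ x ∈ Metric.ball z r, x ∈ frontier (stayIn f (D n)) := by
      by_contra h
      push Not at h
      have hcl := (isCompact_stayIn hc (hDo n) (hDb n) (hb n)).isClosed
      have hin : ∀ x ∈ Metric.ball z r, x ∈ stayIn f (D n) → x ∈ interior (stayIn f (D n)) := by
        intro x hxB hxK
        by_contra h'
        exact h x hxB ⟨subset_closure hxK, h'⟩
      obtain ⟨x, -, hx1, hx2⟩ := (convex_ball z r).isPreconnected _ _ isOpen_interior hcl.isOpen_compl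
        (fun x hxB => by
          by_cases hxK : x ∈ stayIn f (D n)
          · exact Or.inl (hin x hxB hxK)
          · exact Or.inr hxK)
        ⟨y, hyB, hin y hyB hn⟩ ⟨y', hy'B, hy'n⟩
      exact hx2 (interior_subset hx1)
    exact ⟨n, x, hrV hxB, hx⟩
  obtain ⟨e, he⟩ := omits_at_most_one hd (hDo n) (hDb n) (hb n) hx hV hxV
  set S := {C : Set ℂ | (∃ w ∈ K, C = connectedComponentIn K w) ∧ (C ∩ V).Nonempty} with hS
  have himage : ∀ k : ℕ, ∀ w, f^[k] '' connectedComponentIn K w ⊆ K := by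
    rintro k w _ ⟨y, hy, rfl⟩
    exact mem_Kf_iterate k (connectedComponentIn_subset _ _ hy)
  have hpre : ∀ k : ℕ, ∀ w, IsPreconnected (f^[k] '' connectedComponentIn K w) := fun k w =>
    isPreconnected_connectedComponentIn.image _ (hc.iterate k).continuousOn
  have hall : {C : Set ℂ | ∃ w ∈ K, C = connectedComponentIn K w}.Countable := by
    let Φ : ℕ → Set ℂ → Set ℂ := fun k C => ⋃ y ∈ C, connectedComponentIn K (f^[k] y)
    have h1 : (({connectedComponentIn K e} : Set (Set ℂ)) ∪ ⋃ k, Φ k '' S).Countable :=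
      (Set.countable_singleton _).union (Set.countable_iUnion fun k => hcount.image _)
    refine h1.mono ?_
    rintro _ ⟨w, hw, rfl⟩
    by_cases hwe : w = e
    · left; rw [hwe]; rfl
    · right
      obtain ⟨k, v, hv, rfl⟩ := he w hwe
      have hvK : v ∈ K := mem_Kf_of_iterate k hw
      refine Set.mem_iUnion.2 ⟨k, connectedComponentIn K v,
        ⟨⟨v, hvK, rfl⟩, v, mem_connectedComponentIn hvK, hv⟩, ?_⟩
      have h2 : ∀ y ∈ connectedComponentIn K v,
          connectedComponentIn K (f^[k] y) = connectedComponentIn K (f^[k] v) := by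
        intro y hy
        refine (connectedComponentIn_eq ?_).symm
        exact (hpre k v).subset_connectedComponentIn ⟨v, mem_connectedComponentIn hvK, rfl⟩
          (himage k v) ⟨y, hy, rfl⟩
      ext u
      simp only [Φ, Set.mem_iUnion]
      constructor
      · rintro ⟨y, hy, hu⟩
        rw [← h2 y hy]; exact hu
      · intro hu
        exact ⟨v, mem_connectedComponentIn hvK, hu⟩
  have hT : ∀ n, n0 ≤ n → ∃ T : Set ℂ, IsPreconnected T ∧ T ⊆ K ∧ stayIn f (D n) ⊆ T := by
    intro n hn
    obtain ⟨A, A', hA, hA', hdis, hAA, hne, w, hw, hAw⟩ := exists_clopen_in_component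
      (isCompact_stayIn hc (hDo n) (hDb n) (hb n)) ⟨x0, hKmono hn hx0⟩ (hKn n) hall
    obtain ⟨k, hk⟩ := clopen_blowup hc hfo (hDo n) (hDb n) (hDc n).isPreconnected (hb n)
      hA hA' hdis hAA hne
    exact ⟨_, hpre k w, himage k w, hk.trans (Set.image_mono hAw)⟩
  refine ⟨⟨x0, hKn _ hx0⟩, isPreconnected_of_forall x0 ?_⟩
  intro y hy
  obtain ⟨m, hm⟩ := hKex y hy
  obtain ⟨T, hT1, hT2, hT3⟩ := hT (max n0 m) (le_max_left _ _)
  exact ⟨T, hT2, hT3 (hKmono (le_max_left _ _) hx0), hT3 (hKmono (le_max_right _ _) hm), hT1⟩
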